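/- Let μ ∈ ℝ and M ∈ ℕ. A CSTN Γ admits a (μ,M)-discrete dynamic and viable relative execution strategy from a non-terminal (μ,M)-discrete configuration c = (t, ψ, h) if and only if there exists a next action (t_next, 𝒯_next) for ψ, with t_next = k_next·μ > t for some integer k_next with 1 ≤ k_next ≤ M, such that, for every observation o : 𝒫_next → {0,1} (where 𝒫_next = {p ∈ 𝒫 : 𝒪(p) ∈ 𝒯_next}), Γ admits a (μ,M)-discrete dynamic and viable relative execution strategy from the (μ,M)-discrete configuration c[t_next/𝒯_next, o]. -/

import Mathlib

/-! A dynamic strategy `σ` from a non-terminal configuration `c` has a well-defined next action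
(`hasWDNA_of_relDynamic`). Choose, among all compatible scenarios and all tasks not yet scheduled, a pair `(s, X)` that
minimizes `tn = σ s X`. By minimality, only variables already observed in `c` are observed before
`tn`, so in every compatible scenario the history at `tn` is exactly `c.h`
(`hist_eq_of_forall_le`). Dynamicity then forces all compatible scenarios to execute the same set
`Tn` of tasks at `tn`, and `σ` itself is a strategy from each `c[tn/Tn, o]`.

Conversely, strategies `τ o` from the configurations `c[tn/Tn, o]` are glued into
`s ↦ τ (obsOf Γ Tn s) s` (`glue`). A task executed after `tn` has in its history the outcome of every
observation in `Tn`, so two scenarios with equal histories follow the same `τ o`; the tasks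
executed up to `tn` are the same in all scenarios. -/

open Classical

/-- A label over propositional variables `P`: a conjunction of positive or negative
literals over distinct variables, encoded as a partial assignment (`none` means the
variable does not occur in the label). The empty label is `fun _ => none`. -/
abbrev CLabel (P : Type) := P → Option Bool

/-- The empty label `λ`. -/
def emptyLabel (P : Type) : CLabel P := fun _ => none

/-- A scenario `s` satisfies a label `ℓ` (written `s ⊨ ℓ`). -/
def sats {P : Type} (s : P → Bool) (ℓ : CLabel P) : Prop :=
  ∀ p b, ℓ p = some b → s p = b

/-- A Conditional Simple Temporal Network over tasks `T` and propositional
variables `P`.  A labeled constraint `(X, Y, δ, ℓ)` represents `(Y - X ≤ δ, ℓ)`. -/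
structure CSTN (T P : Type) where
  /-- The labeled constraints. -/
  C : Set (T × T × ℝ × CLabel P)
  Cfin : C.Finite
  /-- The label of each task. -/
  L : T → CLabel P
  /-- The observation tasks. -/
  OT : Set T
  /-- The observation task of each propositional variable. -/
  obs : P → T
  obs_mem : ∀ p, obs p ∈ OT
  obs_inj : Function.Injective obs
  obs_surj : ∀ X ∈ OT, ∃ p, obs p = X
  /-- Restriction WD1. -/
  wd1 : ∀ c ∈ C, ∀ s : P → Bool, sats s c.2.2.2 → sats s (L c.1) ∧ sats s (L c.2.1)

namespace CSTN

variable {T P : Type} (Γ : CSTN T P)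

/-- The tasks `𝒯_s` executed in scenario `s` (the tasks of the projection `Γ_s`).
An execution strategy is encoded as a total function `σ : (P → Bool) → T → ℝ`;
the values `σ s X` for `X ∉ 𝒯_s` are irrelevant. -/
def Tasks (s : P → Bool) : Set T := {X | sats s (Γ.L X)}

/-- The history `Hist(t, s, σ)`: the partial scenario recording the values in `s` of
the propositional variables observed strictly before time `t`. -/
noncomputable def Hist (σ : (P → Bool) → T → ℝ) (t : ℝ) (s : P → Bool) : P → Option Bool :=
  fun p => if Γ.obs p ∈ Γ.Tasks s ∧ σ s (Γ.obs p) < t then some (s p) else none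

/-- The execution strategy `σ` is dynamic. -/
def Dynamic (σ : (P → Bool) → T → ℝ) : Prop :=
  ∀ s s' : P → Bool, ∀ X ∈ Γ.Tasks s,
    Γ.Hist σ (σ s X) s = Γ.Hist σ (σ s X) s' → X ∈ Γ.Tasks s' ∧ σ s' X = σ s X

/-- The execution strategy `σ` is viable: in every scenario `s`, the schedule `σ s`
satisfies all constraints of the projection `Γ_s`. -/
def Viable (σ : (P → Bool) → T → ℝ) : Prop :=
  ∀ s : P → Bool, ∀ c ∈ Γ.C, sats s c.2.2.2 → σ s c.2.1 - σ s c.1 ≤ c.2.2.1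

/-- `Γ` is dynamically controllable: it admits a dynamic and viable execution strategy. -/
def DynamicallyControllable : Prop :=
  ∃ σ : (P → Bool) → T → ℝ, Γ.Dynamic σ ∧ Γ.Viable σ

end CSTN

/-! ### Configurations and relative execution strategies -/

/-- A configuration `c = (t, ψ, h)`: a time point `t ∈ ℝ ∪ {-∞}`, a partial
schedule `ψ` (encoded as `T → Option ℝ`) and a partial scenario `h`
(encoded as `P → Option Bool`). -/
structure CConfig (T P : Type) where
  t : WithBot ℝ
  ψ : T → Option ℝ
  h : P → Option Bool

/-- Well-formedness of a configuration: `ψ` is a partial schedule up to time `t`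
and the domain of `h` is `{p ∈ 𝒫 ∣ 𝒪(p) ∈ Dom(ψ)}`. -/
def CConfig.WF {T P : Type} (Γ : CSTN T P) (c : CConfig T P) : Prop :=
  (∀ X r, c.ψ X = some r → (r : WithBot ℝ) ≤ c.t) ∧
  (∀ p, (c.h p).isSome ↔ (c.ψ (Γ.obs p)).isSome)

/-- `s ∈ Σ_𝒫[h]`: the scenario `s` is a completion of the partial scenario `h`. -/
def Compatible {P : Type} (h : P → Option Bool) (s : P → Bool) : Prop :=
  ∀ p b, h p = some b → s p = b

/-- The schedule `sch` over `𝒯_s` is a completion of the partial schedule of the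
configuration `c`: its domain `𝒯_s` contains `Dom(ψ)`, it agrees with `ψ` on
`Dom(ψ)`, and it executes all other tasks of `𝒯_s` strictly after time `c.t`. -/
def IsCompletion {T P : Type} (Γ : CSTN T P) (c : CConfig T P) (s : P → Bool)
    (sch : T → ℝ) : Prop :=
  (∀ X, (c.ψ X).isSome → X ∈ Γ.Tasks s) ∧
  (∀ X r, c.ψ X = some r → sch X = r) ∧
  (∀ X ∈ Γ.Tasks s, c.ψ X = none → c.t < (sch X : WithBot ℝ))

/-- A relative execution strategy from the configuration `c` (encoded as a total
function): it maps every scenario `s ∈ Σ_𝒫[h]` to a schedule over `𝒯_s` which is a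
completion of `ψ`. -/
def IsRelStrategy {T P : Type} (Γ : CSTN T P) (c : CConfig T P)
    (σ : (P → Bool) → T → ℝ) : Prop :=
  ∀ s : P → Bool, Compatible c.h s → IsCompletion Γ c s (σ s)

/-- The relative execution strategy `σ` from the configuration `c` is dynamic. -/
def RelDynamic {T P : Type} (Γ : CSTN T P) (c : CConfig T P)
    (σ : (P → Bool) → T → ℝ) : Prop :=
  ∀ s s' : P → Bool, Compatible c.h s → Compatible c.h s' → ∀ X ∈ Γ.Tasks s,
    Γ.Hist σ (σ s X) s = Γ.Hist σ (σ s X) s' → X ∈ Γ.Tasks s' ∧ σ s' X = σ s X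

/-- The relative execution strategy `σ` from the configuration `c` is viable:
for every scenario `s ∈ Σ_𝒫[h]`, the schedule `σ s` is feasible for `Γ_s`. -/
def RelViable {T P : Type} (Γ : CSTN T P) (c : CConfig T P)
    (σ : (P → Bool) → T → ℝ) : Prop :=
  ∀ s : P → Bool, Compatible c.h s →
    ∀ con ∈ Γ.C, sats s con.2.2.2 → σ s con.2.1 - σ s con.1 ≤ con.2.2.1

/-- The configuration `c` is terminal: `𝒯_s = Dom(ψ)` for every `s ∈ Σ_𝒫[h]`. -/
def Terminal {T P : Type} (Γ : CSTN T P) (c : CConfig T P) : Prop :=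
  ∀ s : P → Bool, Compatible c.h s → Γ.Tasks s = {X | (c.ψ X).isSome}

/-- `(t_next, 𝒯_next)` is a next action for the configuration `c`: `t_next > t` and
`𝒯_next` is a non-empty set of tasks not scheduled by `ψ`. -/
def NextAction {T P : Type} (c : CConfig T P) (tn : ℝ) (Tn : Set T) : Prop :=
  c.t < (tn : WithBot ℝ) ∧ Tn.Nonempty ∧ ∀ X ∈ Tn, c.ψ X = none

/-- The strategy `σ` from the configuration `c` has the well-defined next action
`(tn, Tn)`: for every scenario `s ∈ Σ_𝒫[h]`,
`min_{X ∈ 𝒯_s ∖ Dom(ψ)} [σ(s)]_X = tn` and `{X ∈ 𝒯_s ∣ [σ(s)]_X = tn} = Tn`. -/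
def WDNA {T P : Type} (Γ : CSTN T P) (c : CConfig T P) (σ : (P → Bool) → T → ℝ)
    (tn : ℝ) (Tn : Set T) : Prop :=
  NextAction c tn Tn ∧
  ∀ s : P → Bool, Compatible c.h s →
    IsLeast ((σ s) '' {X | X ∈ Γ.Tasks s ∧ c.ψ X = none}) tn ∧
    {X | X ∈ Γ.Tasks s ∧ σ s X = tn} = Tn

/-- The strategy `σ` has a well-defined next action. -/
def HasWDNA {T P : Type} (Γ : CSTN T P) (c : CConfig T P)
    (σ : (P → Bool) → T → ℝ) : Prop :=
  ∃ tn Tn, WDNA Γ c σ tn Tn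

/-- `o` is an observation of `𝒫_next = {p ∈ 𝒫 ∣ 𝒪(p) ∈ 𝒯_next}`: a partial
assignment with domain exactly `𝒫_next`. -/
def IsObs {T P : Type} (Γ : CSTN T P) (Tn : Set T) (o : P → Option Bool) : Prop :=
  ∀ p, (o p).isSome ↔ Γ.obs p ∈ Tn

/-- The next configuration `c[t_next/𝒯_next, o] = (t_next, ψ[t_next/𝒯_next], h ∪ o)`. -/
noncomputable def nextConfig {T P : Type} (Γ : CSTN T P) (c : CConfig T P)
    (tn : ℝ) (Tn : Set T) (o : P → Option Bool) : CConfig T P where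
  t := (tn : WithBot ℝ)
  ψ := fun X => if X ∈ Tn then some tn else c.ψ X
  h := fun p => if Γ.obs p ∈ Tn then o p else c.h p

/-- The observation of `𝒫_next` induced by the scenario `s`. -/
noncomputable def obsOf {T P : Type} (Γ : CSTN T P) (Tn : Set T) (s : P → Bool) :
    P → Option Bool :=
  fun p => if Γ.obs p ∈ Tn then some (s p) else none

/-- `Γ` is dynamically controllable from the configuration `c`: it admits a dynamic
and viable relative execution strategy from `c`. -/
def DCFrom {T P : Type} (Γ : CSTN T P) (c : CConfig T P) : Prop :=
  ∃ σ : (P → Bool) → T → ℝ, IsRelStrategy Γ c σ ∧ RelDynamic Γ c σ ∧ RelViable Γ c σ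

/-- The relative execution strategy `σ` from the configuration `c` is
`(μ, M)`-discrete: every execution time equals `k·μ` for some integer
`k ∈ {1, …, M}`. -/
def DiscreteRelStrategy {T P : Type} (Γ : CSTN T P) (c : CConfig T P)
    (σ : (P → Bool) → T → ℝ) (μ : ℝ) (M : ℕ) : Prop :=
  ∀ s : P → Bool, Compatible c.h s → ∀ X ∈ Γ.Tasks s,
    ∃ k : ℤ, 1 ≤ k ∧ k ≤ (M : ℤ) ∧ σ s X = (k : ℝ) * μ

/-- The configuration `c` is `(μ, M)`-discrete: every scheduled time equals `k·μ`
for some integer `k ∈ {1, …, M}`. -/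
def DiscreteConfig {T P : Type} (c : CConfig T P) (μ : ℝ) (M : ℕ) : Prop :=
  ∀ X r, c.ψ X = some r → ∃ k : ℤ, 1 ≤ k ∧ k ≤ (M : ℤ) ∧ r = (k : ℝ) * μ

/-! ### The next action of a dynamic strategy -/

/-- Before any unscheduled task is executed, the history consists of the observations already
recorded in the configuration. -/
lemma hist_eq_of_forall_le {T P : Type} {Γ : CSTN T P} {c : CConfig T P} (hwf : c.WF Γ)
    {σ : (P → Bool) → T → ℝ} (hσ : IsRelStrategy Γ c σ) {tn : ℝ} (htn : c.t < (tn : WithBot ℝ))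
    {s : P → Bool} (hs : Compatible c.h s)
    (hmin : ∀ X ∈ Γ.Tasks s, c.ψ X = none → tn ≤ σ s X) :
    Γ.Hist σ tn s = c.h := by
  funext p
  obtain ⟨hdom, hval, -⟩ := hσ s hs
  have hp := hwf.2 p
  unfold CSTN.Hist
  cases hψ : c.ψ (Γ.obs p) with
  | none =>
    have hn : c.h p = none := by simpa [hψ] using hp
    rw [hn, if_neg]
    rintro ⟨hmem, hlt⟩
    exact absurd (hmin _ hmem hψ) (not_le.mpr hlt)
  | some r =>
    obtain ⟨b, hb⟩ := Option.isSome_iff_exists.mp (hp.mpr (by simp [hψ]))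
    have hlt : σ s (Γ.obs p) < tn := by
      rw [hval _ _ hψ]
      exact WithBot.coe_lt_coe.mp ((hwf.1 _ _ hψ).trans_lt htn)
    rw [if_pos ⟨hdom _ (by simp [hψ]), hlt⟩, hb, hs p b hb]

/-- Non-terminality yields a task still to be executed, since `Dom(ψ) ⊆ 𝒯_s` as soon as a
relative strategy exists. -/
lemma exists_unscheduled {T P : Type} {Γ : CSTN T P} {c : CConfig T P}
    {σ : (P → Bool) → T → ℝ} (hσ : IsRelStrategy Γ c σ) (hnt : ¬ Terminal Γ c) :
    ∃ s X, Compatible c.h s ∧ X ∈ Γ.Tasks s ∧ c.ψ X = none := by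
  by_contra! hno
  refine hnt fun s hs => Set.Subset.antisymm (fun X hX => ?_) fun X hX => (hσ s hs).1 X hX
  exact Option.isSome_iff_ne_none.mpr (hno s X hs hX)

/-- A dynamic relative strategy from a non-terminal configuration has a well-defined next
action. -/
lemma hasWDNA_of_relDynamic {T P : Type} [Finite T] [Finite P] {Γ : CSTN T P}
    {c : CConfig T P} (hwf : c.WF Γ) (hnt : ¬ Terminal Γ c) {σ : (P → Bool) → T → ℝ}
    (hσ : IsRelStrategy Γ c σ) (hd : RelDynamic Γ c σ) : HasWDNA Γ c σ := by
  obtain ⟨s₀, X₀, h₀⟩ := exists_unscheduled hσ hnt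
  obtain ⟨⟨s, X⟩, ⟨hs, hX, hXψ⟩, hmin⟩ := Set.exists_min_image
    {q : (P → Bool) × T | Compatible c.h q.1 ∧ q.2 ∈ Γ.Tasks q.1 ∧ c.ψ q.2 = none}
    (fun q => σ q.1 q.2) (Set.toFinite _) ⟨(s₀, X₀), h₀⟩
  have hmin' : ∀ s', Compatible c.h s' → ∀ Y ∈ Γ.Tasks s', c.ψ Y = none → σ s X ≤ σ s' Y :=
    fun s' hs' Y hY hYψ => hmin (s', Y) ⟨hs', hY, hYψ⟩
  have hlt : c.t < (σ s X : WithBot ℝ) := (hσ s hs).2.2 X hX hXψ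
  -- all compatible scenarios share the history `c.h` at time `σ s X`
  have htransfer : ∀ s₁ s₂, Compatible c.h s₁ → Compatible c.h s₂ → ∀ Y ∈ Γ.Tasks s₁,
      σ s₁ Y = σ s X → Y ∈ Γ.Tasks s₂ ∧ σ s₂ Y = σ s X := by
    intro s₁ s₂ h₁ h₂ Y hY he
    have := hd s₁ s₂ h₁ h₂ Y hY (by
      rw [he, hist_eq_of_forall_le hwf hσ hlt h₁ (hmin' s₁ h₁),
        hist_eq_of_forall_le hwf hσ hlt h₂ (hmin' s₂ h₂)])
    rwa [he] at this
  refine ⟨σ s X, {Y | Y ∈ Γ.Tasks s ∧ σ s Y = σ s X}, ⟨hlt, ⟨X, hX, rfl⟩, ?_⟩, ?_⟩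
  · rintro Y ⟨-, hYe⟩
    by_contra hne
    obtain ⟨r, hr⟩ := Option.ne_none_iff_exists'.mp hne
    have := (hwf.1 _ _ hr).trans_lt hlt
    rw [← hYe, (hσ s hs).2.1 _ _ hr] at this
    exact lt_irrefl _ this
  · intro s' hs'
    refine ⟨⟨?_, ?_⟩, ?_⟩
    · obtain ⟨hX', he⟩ := htransfer s s' hs hs' X hX rfl
      exact ⟨X, ⟨hX', hXψ⟩, he⟩
    · rintro _ ⟨Y, ⟨hY, hYψ⟩, rfl⟩
      exact hmin' s' hs' Y hY hYψ
    · ext Y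
      exact ⟨fun h => htransfer s' s hs' hs Y h.1 h.2, fun h => htransfer s s' hs hs' Y h.1 h.2⟩

/-! ### Passing between `c` and the configurations `c[tn/Tn, o]` -/

/-- An observation of unscheduled tasks only adds information, so `h ∪ o` extends `h`. -/
lemma Compatible.of_nextConfig {T P : Type} {Γ : CSTN T P} {c : CConfig T P} (hwf : c.WF Γ)
    {tn : ℝ} {Tn : Set T} (hna : NextAction c tn Tn) {o : P → Option Bool} {s : P → Bool}
    (hs : Compatible (nextConfig Γ c tn Tn o).h s) : Compatible c.h s := by
  intro p b hb
  refine hs p b ?_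
  have hnot : Γ.obs p ∉ Tn := fun hp => by
    have := (hwf.2 p).mp (by simp [hb])
    simp [hna.2.2 _ hp] at this
  simp [nextConfig, hnot, hb]

lemma Compatible.nextConfig_obsOf {T P : Type} {Γ : CSTN T P} {c : CConfig T P}
    (tn : ℝ) (Tn : Set T) {s : P → Bool} (hs : Compatible c.h s) :
    Compatible (nextConfig Γ c tn Tn (obsOf Γ Tn s)).h s := by
  intro p b hb
  by_cases hp : Γ.obs p ∈ Tn
  · simpa [nextConfig, obsOf, hp] using hb
  · exact hs p b (by simpa [nextConfig, hp] using hb)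

lemma isObs_obsOf {T P : Type} (Γ : CSTN T P) (Tn : Set T) (s : P → Bool) :
    IsObs Γ Tn (obsOf Γ Tn s) := by
  intro p
  by_cases hp : Γ.obs p ∈ Tn <;> simp [obsOf, hp]

/-- After its next action is taken, a strategy remains a relative strategy. -/
lemma IsRelStrategy.nextConfig {T P : Type} {Γ : CSTN T P} {c : CConfig T P} (hwf : c.WF Γ)
    {σ : (P → Bool) → T → ℝ} (hσ : IsRelStrategy Γ c σ) {tn : ℝ} {Tn : Set T}
    (hw : WDNA Γ c σ tn Tn) (o : P → Option Bool) :
    IsRelStrategy Γ (nextConfig Γ c tn Tn o) σ := by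
  intro s hs
  have hs' := Compatible.of_nextConfig hwf hw.1 hs
  obtain ⟨hdom, hval, -⟩ := hσ s hs'
  obtain ⟨⟨-, hle⟩, hTn⟩ := hw.2 s hs'
  have hmem : ∀ X, X ∈ Tn ↔ X ∈ Γ.Tasks s ∧ σ s X = tn := fun X => by rw [← hTn]; rfl
  refine ⟨fun X hX => ?_, fun X r hX => ?_, fun X hXs hX => ?_⟩
  all_goals by_cases hXT : X ∈ Tn
  · exact ((hmem X).mp hXT).1
  · exact hdom X (by simpa [_root_.nextConfig, hXT] using hX)
  · have hr : tn = r := by simpa [_root_.nextConfig, hXT] using hX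
    exact ((hmem X).mp hXT).2.trans hr
  · exact hval X r (by simpa [_root_.nextConfig, hXT] using hX)
  · simp [_root_.nextConfig, hXT] at hX
  · have hXψ : c.ψ X = none := by simpa [_root_.nextConfig, hXT] using hX
    refine WithBot.coe_lt_coe.mpr (lt_of_le_of_ne (hle ⟨X, ⟨hXs, hXψ⟩, rfl⟩) fun he => ?_)
    exact hXT ((hmem X).mpr ⟨hXs, he.symm⟩)

/-- Follow, in scenario `s`, the strategy `τ o` chosen for the observation `o` that `s` induces
on `Tn`. -/
noncomputable def glue {T P : Type} (Γ : CSTN T P) (Tn : Set T)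
    (τ : (P → Option Bool) → (P → Bool) → T → ℝ) : (P → Bool) → T → ℝ :=
  fun s => τ (obsOf Γ Tn s) s

lemma glue_isRelStrategy {T P : Type} {Γ : CSTN T P} {c : CConfig T P} {tn : ℝ} {Tn : Set T}
    (hna : NextAction c tn Tn) {τ : (P → Option Bool) → (P → Bool) → T → ℝ}
    (hτ : ∀ o, IsObs Γ Tn o → IsRelStrategy Γ (nextConfig Γ c tn Tn o) (τ o)) :
    IsRelStrategy Γ c (glue Γ Tn τ) := by
  intro s hs
  obtain ⟨hdom, hval, hlt⟩ := hτ _ (isObs_obsOf Γ Tn s) s (hs.nextConfig_obsOf tn Tn)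
  have hold : ∀ X, (c.ψ X).isSome → X ∉ Tn := fun X hX hXT => by simp [hna.2.2 X hXT] at hX
  refine ⟨fun X hX => ?_, fun X r hX => ?_, fun X hXs hX => ?_⟩
  · exact hdom X (by simpa [nextConfig, hold X hX] using hX)
  · have hXT := hold X (by simp [hX])
    exact hval X r (by simpa [nextConfig, hXT] using hX)
  · by_cases hXT : X ∈ Tn
    · have he : glue Γ Tn τ s X = tn := hval X tn (by simp [nextConfig, hXT])
      rw [he]
      exact hna.1
    · exact hna.1.trans (hlt X hXs (by simpa [nextConfig, hXT] using hX))

/-- Tasks executed up to `tn` do not depend on the scenario; later ones have the outcome of every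
observation in `Tn` in their history. -/
lemma glue_relDynamic {T P : Type} {Γ : CSTN T P} {c : CConfig T P} {tn : ℝ} {Tn : Set T}
    {τ : (P → Option Bool) → (P → Bool) → T → ℝ}
    (hτ : ∀ o, IsObs Γ Tn o → IsRelStrategy Γ (nextConfig Γ c tn Tn o) (τ o))
    (hτd : ∀ o, IsObs Γ Tn o → RelDynamic Γ (nextConfig Γ c tn Tn o) (τ o)) :
    RelDynamic Γ c (glue Γ Tn τ) := by
  intro s s' hs hs' X hX hH
  obtain ⟨hdom, hval, hlt⟩ := hτ _ (isObs_obsOf Γ Tn s) s (hs.nextConfig_obsOf tn Tn)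
  obtain ⟨hdom', hval', -⟩ := hτ _ (isObs_obsOf Γ Tn s') s' (hs'.nextConfig_obsOf tn Tn)
  cases hψ : (nextConfig Γ c tn Tn (obsOf Γ Tn s)).ψ X with
  | some r =>
    -- the partial schedule of `c[tn/Tn, o]` does not depend on `o`
    exact ⟨hdom' X (Option.isSome_iff_exists.mpr ⟨r, hψ⟩),
      (hval' X r hψ).trans (hval X r hψ).symm⟩
  | none =>
    have hgt : tn < glue Γ Tn τ s X := WithBot.coe_lt_coe.mp (hlt X hX hψ)
    have hobs : obsOf Γ Tn s = obsOf Γ Tn s' := by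
      funext p
      by_cases hp : Γ.obs p ∈ Tn
      · have hm : Γ.obs p ∈ Γ.Tasks s := hdom _ (by simp [nextConfig, hp])
        have hm' : Γ.obs p ∈ Γ.Tasks s' := hdom' _ (by simp [nextConfig, hp])
        have ht : glue Γ Tn τ s (Γ.obs p) = tn := hval _ tn (by simp [nextConfig, hp])
        have ht' : glue Γ Tn τ s' (Γ.obs p) = tn := hval' _ tn (by simp [nextConfig, hp])
        have := congrFun hH p
        rw [CSTN.Hist, CSTN.Hist, if_pos ⟨hm, ht ▸ hgt⟩, if_pos ⟨hm', ht' ▸ hgt⟩] at this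
        simpa [obsOf, hp] using this
      · simp [obsOf, hp]
    have he : glue Γ Tn τ s' = τ (obsOf Γ Tn s) s' := by rw [hobs]; rfl
    have hc' := hs'.nextConfig_obsOf (Γ := Γ) tn Tn
    rw [← hobs] at hc'
    have hH' : Γ.Hist (τ (obsOf Γ Tn s)) (τ (obsOf Γ Tn s) s X) s
        = Γ.Hist (τ (obsOf Γ Tn s)) (τ (obsOf Γ Tn s) s X) s' := by
      unfold CSTN.Hist at hH ⊢
      rw [he] at hH
      exact hH
    rw [he]
    exact hτd _ (isObs_obsOf Γ Tn s) s s' (hs.nextConfig_obsOf tn Tn) hc' X hX hH'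

/-- **Lemma 15** (discrete inductive case). A CSTN `Γ` admits a `(μ, M)`-discrete
dynamic and viable relative execution strategy from a non-terminal
`(μ, M)`-discrete configuration `c = (t, ψ, h)` iff there exists a next action
`(t_next, 𝒯_next)` for `ψ` with `t_next = k_next·μ > t` for some integer
`k_next ∈ {1, …, M}` such that, for every observation `o` of `𝒫_next`, `Γ` admits
a `(μ, M)`-discrete dynamic and viable relative execution strategy from the
`(μ, M)`-discrete configuration `c[t_next/𝒯_next, o]`. -/
theorem discrete_dcFrom_nonterminal_iff {T P : Type} [Finite T] [Finite P]
    (Γ : CSTN T P) (c : CConfig T P) (μ : ℝ) (M : ℕ)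
    (hwf : c.WF Γ) (hnt : ¬ Terminal Γ c) (hcd : DiscreteConfig c μ M) :
    (∃ σ : (P → Bool) → T → ℝ, IsRelStrategy Γ c σ ∧ RelDynamic Γ c σ ∧
        RelViable Γ c σ ∧ DiscreteRelStrategy Γ c σ μ M) ↔
      ∃ (kn : ℤ) (Tn : Set T), 1 ≤ kn ∧ kn ≤ (M : ℤ) ∧
        NextAction c ((kn : ℝ) * μ) Tn ∧
        ∀ o : P → Option Bool, IsObs Γ Tn o →
          ∃ σ : (P → Bool) → T → ℝ,
            IsRelStrategy Γ (nextConfig Γ c ((kn : ℝ) * μ) Tn o) σ ∧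
            RelDynamic Γ (nextConfig Γ c ((kn : ℝ) * μ) Tn o) σ ∧
            RelViable Γ (nextConfig Γ c ((kn : ℝ) * μ) Tn o) σ ∧
            DiscreteRelStrategy Γ (nextConfig Γ c ((kn : ℝ) * μ) Tn o) σ μ M := by
  constructor
  · rintro ⟨σ, hσ, hd, hv, hdisc⟩
    obtain ⟨tn, Tn, hw⟩ := hasWDNA_of_relDynamic hwf hnt hσ hd
    obtain ⟨s, -, hs, -⟩ := exists_unscheduled hσ hnt
    obtain ⟨X, ⟨hX, -⟩, hXe⟩ := (hw.2 s hs).1.1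
    obtain ⟨k, hk1, hkM, hk⟩ := hdisc s hs X hX
    obtain rfl : tn = (k : ℝ) * μ := hXe.symm.trans hk
    have hc : ∀ {o s}, Compatible (nextConfig Γ c ((k : ℝ) * μ) Tn o).h s → Compatible c.h s :=
      Compatible.of_nextConfig hwf hw.1
    exact ⟨k, Tn, hk1, hkM, hw.1, fun o _ => ⟨σ, hσ.nextConfig hwf hw o,
      fun s s' h h' => hd s s' (hc h) (hc h'), fun s h => hv s (hc h),
      fun s h => hdisc s (hc h)⟩⟩
  · rintro ⟨kn, Tn, -, -, hna, hall⟩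
    choose! τ hτ hτd hτv hτdisc using hall
    exact ⟨glue Γ Tn τ, glue_isRelStrategy hna hτ, glue_relDynamic hτ hτd,
      fun s h => hτv _ (isObs_obsOf Γ Tn s) s (h.nextConfig_obsOf _ Tn),
      fun s h => hτdisc _ (isObs_obsOf Γ Tn s) s (h.nextConfig_obsOf _ Tn)⟩
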